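/- arXiv:2409.14512 — 4 statements merged into one kernel-verified Lean document; each statement's English description precedes it below -/
import Mathlib

section
/- For every real numbers a, b ≥ 0 and c > 0 and every natural number k ≥ 1, the ascending factorials satisfy (c+a)_k (c+b)_k ≥ (c)_k (c+a+b)_k + (ab)^k. -/
open Polynomial

/-!
For each `i`, `(c + a + i) (c + b + i) = (c + i) (c + a + b + i) + a b`. Multiplying over `i < k`,
the claim becomes the superadditivity `∏ uᵢ + ∏ vᵢ ≤ ∏ (uᵢ + vᵢ)` of nonempty products of
nonnegative factors, with `vᵢ = a b` constant.
-/

theorem ascPochhammer_eval_eq_prod_range {R : Type*} [CommSemiring R] (n : ℕ) (r : R) :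
    (ascPochhammer R n).eval r = ∏ i ∈ Finset.range n, (r + i) := by
  induction n with
  | zero => simp
  | succ n ih => rw [ascPochhammer_succ_eval, ih, Finset.prod_range_succ]

theorem ascPochhammer_eval_add_mul_eval_add {R : Type*} [CommSemiring R] (a b c : R) (k : ℕ) :
    (ascPochhammer R k).eval (c + a) * (ascPochhammer R k).eval (c + b) =
      ∏ i ∈ Finset.range k, ((c + i) * (c + a + b + i) + a * b) := by
  simp only [ascPochhammer_eval_eq_prod_range, ← Finset.prod_mul_distrib]
  exact Finset.prod_congr rfl fun i _ ↦ by ring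

section OrderedCommSemiring

variable {R : Type*} [CommSemiring R] [PartialOrder R] [IsOrderedRing R]

theorem prod_add_prod_le_prod_add {ι : Type*} {s : Finset ι} (hs : s.Nonempty) {u v : ι → R}
    (hu : ∀ i ∈ s, 0 ≤ u i) (hv : ∀ i ∈ s, 0 ≤ v i) :
    ∏ i ∈ s, u i + ∏ i ∈ s, v i ≤ ∏ i ∈ s, (u i + v i) := by
  obtain ⟨i, hi⟩ := hs
  exact Finset.prod_add_prod_le hi le_rfl (fun j hj _ ↦ le_add_of_nonneg_right (hv j hj))
    (fun j hj _ ↦ le_add_of_nonneg_left (hu j hj)) hu hv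

theorem ascFactorial_product_lower_bound_general {a b c : R} (hc : 0 ≤ c) (hcab : 0 ≤ c + a + b)
    (hab : 0 ≤ a * b) {k : ℕ} (hk : k ≠ 0) :
    (ascPochhammer R k).eval c * (ascPochhammer R k).eval (c + a + b) + (a * b) ^ k ≤
      (ascPochhammer R k).eval (c + a) * (ascPochhammer R k).eval (c + b) := by
  have factor_nonneg (i : ℕ) : 0 ≤ (c + i) * (c + a + b + i) :=
    mul_nonneg (add_nonneg hc i.cast_nonneg) (add_nonneg hcab i.cast_nonneg)
  calc (ascPochhammer R k).eval c * (ascPochhammer R k).eval (c + a + b) + (a * b) ^ k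
    _ = ∏ i ∈ Finset.range k, (c + i) * (c + a + b + i) + ∏ _i ∈ Finset.range k, a * b := by
      simp only [ascPochhammer_eval_eq_prod_range, Finset.prod_mul_distrib, Finset.prod_const,
        Finset.card_range, mul_pow]
    _ ≤ ∏ i ∈ Finset.range k, ((c + i) * (c + a + b + i) + a * b) :=
      prod_add_prod_le_prod_add (Finset.nonempty_range_iff.mpr hk)
        (fun i _ ↦ factor_nonneg i) fun _ _ ↦ hab
    _ = (ascPochhammer R k).eval (c + a) * (ascPochhammer R k).eval (c + b) :=
      (ascPochhammer_eval_add_mul_eval_add a b c k).symm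

end OrderedCommSemiring

/-- For reals `a, b ≥ 0`, `c > 0` and `k ≥ 1`, the ascending factorials satisfy
`(c+a)_k (c+b)_k ≥ (c)_k (c+a+b)_k + (ab)^k`. -/
theorem ascFactorial_product_lower_bound (a b c : ℝ) (ha : 0 ≤ a) (hb : 0 ≤ b)
    (hc : 0 < c) (k : ℕ) (hk : 1 ≤ k) :
    (ascPochhammer ℝ k).eval (c + a) * (ascPochhammer ℝ k).eval (c + b) ≥
      (ascPochhammer ℝ k).eval c * (ascPochhammer ℝ k).eval (c + a + b) + (a * b) ^ k :=
  ascFactorial_product_lower_bound_general hc.le (by positivity) (mul_nonneg ha hb)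
    (Nat.one_le_iff_ne_zero.mp hk)
end

section
/- Let A be a real symmetric positive definite matrix of size (p₁+p₂)×(p₁+p₂) partitioned into blocks A = [[A₁₁, A₁₂],[A₂₁, A₂₂]] with A₁₁ of size p₁×p₁, A₂₂ of size p₂×p₂, and A₂₁ = A₁₂ᵀ. Let P = A₁₁^{−1/2} A₁₂ A₂₂^{−1/2}. Then the matrix I_{p₁} − P Pᵀ is symmetric positive definite; in particular every eigenvalue of P Pᵀ lies in [0, 1). -/
open Matrix

/-!
The Schur complement `A₁₁ - A₁₂ A₂₂⁻¹ A₁₂ᴴ` of a positive definite block matrix is positive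
definite, since its form at `x` is the block form at `(x, -A₂₂⁻¹ A₁₂ᴴ x)`. If `A₁₁ = L₁ L₁ᴴ` and
`A₂₂ = L₂ L₂ᴴ`, then the congruence by `L₁⁻¹` carries it to `1 - P Pᴴ`, where
`P = L₁⁻¹ A₁₂ (L₂ᴴ)⁻¹`; symmetric square roots are the factors with `Lᵢᴴ = Lᵢ`. An eigenvalue `μ`
of `P Pᴴ` is nonnegative because `P Pᴴ` is positive semidefinite, and less than `1` because `1 - μ`
is an eigenvalue of `1 - P Pᴴ`.
-/

section SchurComplement

variable {R m n : Type*} [CommRing R] [StarRing R] [Fintype n] [DecidableEq n]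

theorem posDef_schurComplement₂₂ [PartialOrder R] [Finite m] {A : Matrix m m R}
    {B : Matrix m n R} {D : Matrix n n R} [Invertible D] (h : (fromBlocks A B Bᴴ D).PosDef) :
    (A - B * D⁻¹ * Bᴴ).PosDef := by
  have := Fintype.ofFinite m
  have hD : D.IsHermitian := (isHermitian_fromBlocks_iff.mp h.isHermitian).2.2.2
  refine .of_dotProduct_mulVec_pos ((IsHermitian.fromBlocks₂₂ A B hD).mp h.isHermitian)
    fun x hx ↦ ?_
  set y : n → R := -((D⁻¹ * Bᴴ) *ᵥ x) with hy
  have hxy : x ⊕ᵥ y ≠ 0 := fun h0 ↦ hx (funext fun i ↦ congrFun h0 (Sum.inl i))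
  have hpos := h.dotProduct_mulVec_pos hxy
  rwa [dotProduct_mulVec, schur_complement_eq₂₂ A B x y hD, hy, add_neg_cancel, dotProduct_zero,
    zero_add, ← dotProduct_mulVec] at hpos

theorem one_sub_mul_conjTranspose_eq_congr_schurComplement [Fintype m] [DecidableEq m]
    {L₁ : Matrix m m R} (hL₁ : IsUnit L₁) (B : Matrix m n R) (L₂ : Matrix n n R) :
    1 - (L₁⁻¹ * B * L₂ᴴ⁻¹) * (L₁⁻¹ * B * L₂ᴴ⁻¹)ᴴ =
      L₁⁻¹ * (L₁ * L₁ᴴ - B * (L₂ * L₂ᴴ)⁻¹ * Bᴴ) * L₁⁻¹ᴴ := by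
  have hdet : IsUnit L₁.det := (isUnit_iff_isUnit_det L₁).mp hL₁
  have hone : L₁⁻¹ * (L₁ * L₁ᴴ) * L₁⁻¹ᴴ = 1 := by
    rw [nonsing_inv_mul_cancel_left _ _ hdet, ← conjTranspose_mul, nonsing_inv_mul _ hdet,
      conjTranspose_one]
  rw [Matrix.mul_sub, Matrix.sub_mul, hone, Matrix.mul_inv_rev]
  simp only [conjTranspose_mul, conjTranspose_nonsing_inv, conjTranspose_conjTranspose,
    Matrix.mul_assoc]

end SchurComplement

section StarOrderedField

variable {K n : Type*} [Field K] [PartialOrder K] [StarRing K] [StarOrderedRing K]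

theorem inv_pos_of_starOrderedRing {a : K} (ha : 0 < a) : 0 < a⁻¹ := by
  have h := star_left_conjugate_pos ha (IsRegular.of_ne_zero (inv_ne_zero ha.ne'))
  rwa [star_inv₀, ha.le.star_eq, inv_mul_cancel₀ ha.ne', one_mul] at h

variable [Fintype n] {M : Matrix n n K} {v : n → K} {μ : K}

theorem eigenvalue_eq_rayleigh_quotient (hv : v ≠ 0) (hMv : M *ᵥ v = μ • v) :
    μ = (star v ⬝ᵥ (M *ᵥ v)) * (star v ⬝ᵥ v)⁻¹ := by
  rw [hMv, dotProduct_smul, smul_eq_mul,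
    mul_inv_cancel_right₀ (dotProduct_star_self_pos_iff.mpr hv).ne']

theorem eigenvalue_nonneg_of_posSemidef (hM : M.PosSemidef) (hv : v ≠ 0)
    (hMv : M *ᵥ v = μ • v) : 0 ≤ μ := by
  rw [eigenvalue_eq_rayleigh_quotient hv hMv]
  exact mul_nonneg (hM.dotProduct_mulVec_nonneg v)
    (inv_pos_of_starOrderedRing (dotProduct_star_self_pos_iff.mpr hv)).le

theorem eigenvalue_pos_of_posDef (hM : M.PosDef) (hv : v ≠ 0) (hMv : M *ᵥ v = μ • v) :
    0 < μ := by
  rw [eigenvalue_eq_rayleigh_quotient hv hMv]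
  exact mul_pos (hM.dotProduct_mulVec_pos hv)
    (inv_pos_of_starOrderedRing (dotProduct_star_self_pos_iff.mpr hv))

theorem eigenvalue_mem_Ico_of_posDef_one_sub [DecidableEq n] (hM : M.PosSemidef)
    (hM' : (1 - M).PosDef) (hμ : Module.End.HasEigenvalue (toLin' M) μ) :
    μ ∈ Set.Ico 0 1 := by
  obtain ⟨v, hv⟩ := hμ.exists_hasEigenvector
  have hMv : M *ᵥ v = μ • v := by simpa only [toLin'_apply] using hv.apply_eq_smul
  have hMv' : (1 - M) *ᵥ v = (1 - μ) • v := by rw [sub_mulVec, one_mulVec, hMv, sub_smul, one_smul]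
  exact ⟨eigenvalue_nonneg_of_posSemidef hM hv.2 hMv,
    sub_pos.mp (eigenvalue_pos_of_posDef hM' hv.2 hMv')⟩

theorem one_sub_P_Pt_posDef_general {m : Type*} [Fintype m] [DecidableEq m] [DecidableEq n]
    {A₁₁ : Matrix m m K} {A₁₂ : Matrix m n K} {A₂₂ : Matrix n n K}
    (hA : (fromBlocks A₁₁ A₁₂ A₁₂ᴴ A₂₂).PosDef)
    {L₁ : Matrix m m K} (hL₁ : L₁ * L₁ᴴ = A₁₁) {L₂ : Matrix n n K} (hL₂ : L₂ * L₂ᴴ = A₂₂) :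
    (1 - (L₁⁻¹ * A₁₂ * L₂ᴴ⁻¹) * (L₁⁻¹ * A₁₂ * L₂ᴴ⁻¹)ᴴ).PosDef ∧
      ∀ μ : K,
        Module.End.HasEigenvalue
          (toLin' ((L₁⁻¹ * A₁₂ * L₂ᴴ⁻¹) * (L₁⁻¹ * A₁₂ * L₂ᴴ⁻¹)ᴴ)) μ →
        0 ≤ μ ∧ μ < 1 := by
  subst hL₁ hL₂
  have hA₁₁ : (L₁ * L₁ᴴ).PosDef := hA.submatrix Sum.inl_injective
  have hA₂₂ : (L₂ * L₂ᴴ).PosDef := hA.submatrix Sum.inr_injective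
  have hL₁ : IsUnit L₁ := isUnit_of_mul_isUnit_left hA₁₁.isUnit
  let _ : Invertible (L₂ * L₂ᴴ) := hA₂₂.isUnit.invertible
  have hP : (1 - (L₁⁻¹ * A₁₂ * L₂ᴴ⁻¹) * (L₁⁻¹ * A₁₂ * L₂ᴴ⁻¹)ᴴ).PosDef := by
    rw [one_sub_mul_conjTranspose_eq_congr_schurComplement hL₁]
    exact (posDef_schurComplement₂₂ hA).mul_mul_conjTranspose_same
      (vecMul_injective_of_isUnit (isUnit_nonsing_inv_iff.mpr hL₁))
  exact ⟨hP, fun μ ↦ eigenvalue_mem_Ico_of_posDef_one_sub (posSemidef_self_mul_conjTranspose _) hP⟩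

end StarOrderedField

/-- For a symmetric positive definite block matrix `A = [[A₁₁, A₁₂],[A₁₂ᵀ, A₂₂]]`,
with `S₁ = A₁₁^{1/2}` and `S₂ = A₂₂^{1/2}` the symmetric positive definite square
roots of the diagonal blocks, and `P = A₁₁^{−1/2} A₁₂ A₂₂^{−1/2}`, the matrix
`I − P Pᵀ` is symmetric positive definite; in particular every eigenvalue of
`P Pᵀ` lies in `[0, 1)`. -/
theorem one_sub_P_Pt_posDef (p₁ p₂ : ℕ)
    (A₁₁ : Matrix (Fin p₁) (Fin p₁) ℝ) (A₁₂ : Matrix (Fin p₁) (Fin p₂) ℝ)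
    (A₂₂ : Matrix (Fin p₂) (Fin p₂) ℝ)
    (hA : (Matrix.fromBlocks A₁₁ A₁₂ A₁₂ᵀ A₂₂).PosDef)
    (S₁ : Matrix (Fin p₁) (Fin p₁) ℝ) (hS₁ : S₁.PosDef) (hS₁sq : S₁ * S₁ = A₁₁)
    (S₂ : Matrix (Fin p₂) (Fin p₂) ℝ) (hS₂ : S₂.PosDef) (hS₂sq : S₂ * S₂ = A₂₂) :
    (1 - (S₁⁻¹ * A₁₂ * S₂⁻¹) * (S₁⁻¹ * A₁₂ * S₂⁻¹)ᵀ).PosDef ∧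
      ∀ μ : ℝ,
        Module.End.HasEigenvalue
          (Matrix.toLin' ((S₁⁻¹ * A₁₂ * S₂⁻¹) * (S₁⁻¹ * A₁₂ * S₂⁻¹)ᵀ)) μ →
        0 ≤ μ ∧ μ < 1 := by
  simpa only [conjTranspose_eq_transpose_of_trivial, (isHermitian_iff_isSymm.mp hS₂.1).eq] using
    one_sub_P_Pt_posDef_general hA (L₁ := S₁) (by rwa [hS₁.1]) (L₂ := S₂) (by rwa [hS₂.1])
end

section
/- For every real numbers a, b ≥ 0, c > 0, and x with 0 ≤ x < 1, one has ∑_{k=0}^∞ ((−a)_k (−b)_k / ((c)_k · k!)) x^k ≥ 1 + (1−x)^{c+a+b} · (∑_{k=0}^∞ ((ab)^k / ((c)_k · k!)) x^k − 1), and the right-hand side is at least 1; in particular ₂F₁(−a, −b; c; x) ≥ 1 + (1−x)^{c+a+b}(₀F₁(c; abx) − 1) ≥ 1. -/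
open Polynomial

/-!
Euler's transformation `₂F₁(−a, −b; c; x) = (1−x)^(c+a+b) ₂F₁(c+a, c+b; c; x)` reduces the lower
bound to `₀F₁(c; abx) + (1−x)^(−(c+a+b)) ≤ ₂F₁(c+a, c+b; c; x) + 1`, which holds coefficientwise:
from `(c+a+k)(c+b+k) = (c+k)(c+a+b+k) + ab` one gets
`(ab)^k + (c)_k (c+a+b)_k ≤ (c+a)_k (c+b)_k` for `k ≥ 1` by induction.
-/

open scoped PowerSeries Nat Topology
open Filter

section HypergeometricOperator

variable {R : Type*} [CommRing R]

/-- Gauss's hypergeometric differential operator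
`f ↦ X (1 - X) f'' + (c - (a + b + 1) X) f' - a b f` on formal power series; its kernel contains
the formal `₂F₁(a, b; c; X)`. -/
noncomputable def hypergeometricOperator (a b c : R) (f : R⟦X⟧) : R⟦X⟧ :=
  PowerSeries.X * (1 - PowerSeries.X) * d⁄dX R (d⁄dX R f) +
    (PowerSeries.C c - PowerSeries.C (a + b + 1) * PowerSeries.X) * d⁄dX R f -
    PowerSeries.C (a * b) * f

lemma coeff_X_mul_derivative (f : R⟦X⟧) (n : ℕ) :
    PowerSeries.coeff n (PowerSeries.X * d⁄dX R f) = n * PowerSeries.coeff n f := by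
  cases n with
  | zero => simp
  | succ n => simp [PowerSeries.coeff_succ_X_mul, PowerSeries.coeff_derivative, mul_comm]

lemma coeff_hypergeometricOperator (a b c : R) (f : R⟦X⟧) (n : ℕ) :
    PowerSeries.coeff n (hypergeometricOperator a b c f) =
      PowerSeries.coeff (n + 1) f * ((c + n) * (n + 1)) -
        PowerSeries.coeff n f * ((a + n) * (b + n)) := by
  -- With `θ = X d/dX`, the operator is `(θ + c) d/dX - (θ + a) (θ + b)`.
  have euler_form : hypergeometricOperator a b c f =
      PowerSeries.X * d⁄dX R (d⁄dX R f) + PowerSeries.C c * d⁄dX R f -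
        (PowerSeries.X * d⁄dX R (PowerSeries.X * d⁄dX R f) +
          PowerSeries.C (a + b) * (PowerSeries.X * d⁄dX R f) + PowerSeries.C (a * b) * f) := by
    simp only [hypergeometricOperator, Derivation.leibniz, smul_eq_mul, PowerSeries.derivative_X,
      map_add, map_one]
    ring
  rw [euler_form, map_sub, map_add, map_add, map_add]
  simp only [PowerSeries.coeff_C_mul, coeff_X_mul_derivative, PowerSeries.coeff_derivative]
  ring

lemma hypergeometricOperator_eq_zero_iff {a b c : R} {f : R⟦X⟧} :
    hypergeometricOperator a b c f = 0 ↔ ∀ n : ℕ,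
      PowerSeries.coeff (n + 1) f * ((c + n) * (n + 1)) =
        PowerSeries.coeff n f * ((a + n) * (b + n)) := by
  simp only [PowerSeries.ext_iff, coeff_hypergeometricOperator, map_zero, sub_eq_zero]

lemma eq_of_hypergeometricOperator_eq_zero [IsDomain R] [CharZero R] {a b c : R}
    (hc : ∀ n : ℕ, c + n ≠ 0) {f g : R⟦X⟧} (hf : hypergeometricOperator a b c f = 0)
    (hg : hypergeometricOperator a b c g = 0)
    (h0 : PowerSeries.constantCoeff f = PowerSeries.constantCoeff g) : f = g := by
  rw [hypergeometricOperator_eq_zero_iff] at hf hg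
  ext n
  induction n with
  | zero => simpa using h0
  | succ n ih =>
    have hn : (c + n) * ((n : R) + 1) ≠ 0 := mul_ne_zero (hc n) n.cast_add_one_ne_zero
    exact mul_right_cancel₀ hn (by rw [hf, hg, ih])

/-- The hypothesis on `p` is the differential equation of `(1 - X) ^ (c - a - b)`. -/
lemma hypergeometricOperator_mul {a b c : R} {p : R⟦X⟧}
    (hp : (1 - PowerSeries.X) * d⁄dX R p = PowerSeries.C (a + b - c) * p) (f : R⟦X⟧) :
    hypergeometricOperator a b c (p * f) = p * hypergeometricOperator (c - a) (c - b) c f := by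
  have hp' : (1 - PowerSeries.X) * d⁄dX R (d⁄dX R p) =
      (PowerSeries.C (a + b - c) + 1) * d⁄dX R p := by
    have hdp := congrArg (d⁄dX R) hp
    simp only [Derivation.leibniz, smul_eq_mul, map_sub, PowerSeries.derivative_X,
      PowerSeries.derivative_one, PowerSeries.derivative_C] at hdp ⊢
    linear_combination hdp
  have isUnit_one_sub_X : IsUnit (1 - PowerSeries.X : R⟦X⟧) := by
    simp [PowerSeries.isUnit_iff_constantCoeff]
  refine isUnit_one_sub_X.mul_left_cancel ?_
  simp only [hypergeometricOperator, Derivation.leibniz, smul_eq_mul, map_add, map_sub, map_mul,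
    map_one] at hp hp' ⊢
  set X : R⟦X⟧ := PowerSeries.X
  linear_combination X * (1 - X) * f * hp' + (2 * X * (1 - X) * d⁄dX R f + X * f *
    (PowerSeries.C a + PowerSeries.C b - PowerSeries.C c + 1) +
    (PowerSeries.C c - (PowerSeries.C a + PowerSeries.C b + 1) * X) * f) * hp

end HypergeometricOperator

section NegativeBinomialSeries

variable {R : Type*} [CommRing R] [BinomialRing R]

lemma multichoose_succ_mul (s : R) (n : ℕ) :
    Ring.multichoose s (n + 1) * (n + 1) = Ring.multichoose s n * (s + n) := by
  have := BinomialRing.toIsAddTorsionFree (R := R)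
  rw [← nsmul_right_inj n.factorial_ne_zero]
  calc n ! • (Ring.multichoose s (n + 1) * (n + 1))
      = (n + 1)! • Ring.multichoose s (n + 1) := by
        simp only [Nat.factorial_succ, nsmul_eq_mul, Nat.cast_mul, Nat.cast_succ]
        ring
    _ = n ! • Ring.multichoose s n * (s + n) := by
        simp only [Ring.factorial_nsmul_multichoose_eq_ascPochhammer,
          ascPochhammer_smeval_eq_eval, ascPochhammer_succ_eval]
    _ = n ! • (Ring.multichoose s n * (s + n)) := smul_mul_assoc _ _ _

/-- The formal power series of `(1 - X) ^ (-s)`, with coefficients `(s)_n / n!` given by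
`Ring.multichoose`. -/
noncomputable def oneSubPowNegSeries (s : R) : R⟦X⟧ :=
  PowerSeries.mk (Ring.multichoose s)

lemma one_sub_X_mul_derivative_oneSubPowNegSeries (s : R) :
    (1 - PowerSeries.X) * d⁄dX R (oneSubPowNegSeries s) =
      PowerSeries.C s * oneSubPowNegSeries s := by
  ext n
  simp only [sub_mul, one_mul, map_sub, coeff_X_mul_derivative, PowerSeries.coeff_derivative,
    PowerSeries.coeff_C_mul, oneSubPowNegSeries, PowerSeries.coeff_mk]
  linear_combination multichoose_succ_mul s n

end NegativeBinomialSeries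

section EulerTransformation

variable {K : Type*} [Field K] [CharZero K]

lemma ordinaryHypergeometricCoefficient_succ_mul (a b : K) {c : K} {n : ℕ} (hc : c + n ≠ 0) :
    ordinaryHypergeometricCoefficient a b c (n + 1) * ((c + n) * (n + 1)) =
      ordinaryHypergeometricCoefficient a b c n * ((a + n) * (b + n)) := by
  have hn : (n : K) + 1 ≠ 0 := n.cast_add_one_ne_zero
  simp only [ordinaryHypergeometricCoefficient, ascPochhammer_succ_eval, Nat.factorial_succ,
    Nat.cast_mul, Nat.cast_succ]
  field_simp

/-- The formal power series of `₂F₁(a, b; c; X)`. -/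
noncomputable def hypergeometricPowerSeries (a b c : K) : K⟦X⟧ :=
  PowerSeries.mk (ordinaryHypergeometricCoefficient a b c)

lemma hypergeometricOperator_hypergeometricPowerSeries (a b : K) {c : K}
    (hc : ∀ n : ℕ, c + n ≠ 0) :
    hypergeometricOperator a b c (hypergeometricPowerSeries a b c) = 0 := by
  rw [hypergeometricOperator_eq_zero_iff]
  intro n
  simpa only [hypergeometricPowerSeries, PowerSeries.coeff_mk] using
    ordinaryHypergeometricCoefficient_succ_mul a b (hc n)

theorem hypergeometricPowerSeries_eq_oneSubPowNegSeries_mul (a b : K) {c : K}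
    (hc : ∀ n : ℕ, c + n ≠ 0) :
    hypergeometricPowerSeries a b c =
      oneSubPowNegSeries (a + b - c) * hypergeometricPowerSeries (c - a) (c - b) c := by
  refine eq_of_hypergeometricOperator_eq_zero hc
    (hypergeometricOperator_hypergeometricPowerSeries a b hc) ?_ ?_
  · rw [hypergeometricOperator_mul (one_sub_X_mul_derivative_oneSubPowNegSeries _),
      hypergeometricOperator_hypergeometricPowerSeries _ _ hc, mul_zero]
  · simp [hypergeometricPowerSeries, oneSubPowNegSeries]

end EulerTransformation

section Convergence

lemma ordinaryHypergeometric_eq_tsum_div {K : Type*} [Field K] [TopologicalSpace K]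
    [IsTopologicalRing K] (a b c x : K) :
    ₂F₁ a b c x = ∑' n : ℕ, (ascPochhammer K n).eval a * (ascPochhammer K n).eval b /
      ((ascPochhammer K n).eval c * n !) * x ^ n := by
  rw [ordinaryHypergeometric_eq_tsum]
  refine tsum_congr fun n ↦ ?_
  rw [smul_eq_mul]
  ring

variable {𝕂 : Type*} [RCLike 𝕂]

lemma one_le_radius_ordinaryHypergeometricSeries (a b c : 𝕂) :
    1 ≤ (ordinaryHypergeometricSeries 𝕂 a b c).radius := by
  by_cases habc : ∀ n : ℕ, (n : 𝕂) ≠ -a ∧ (n : 𝕂) ≠ -b ∧ (n : 𝕂) ≠ -c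
  · exact (ordinaryHypergeometricSeries_radius_eq_one 𝕂 a b c habc).ge
  · obtain ⟨n, hn⟩ : ∃ n : ℕ, a = -n ∨ b = -n ∨ c = -n := by
      simpa only [not_forall, not_and_or, not_ne_iff, eq_neg_iff_add_eq_zero, add_comm] using habc
    rcases hn with rfl | rfl | rfl
    · simp [ordinaryHypergeometric_radius_top_of_neg_nat₁]
    · simp [ordinaryHypergeometric_radius_top_of_neg_nat₂]
    · simp [ordinaryHypergeometric_radius_top_of_neg_nat₃]

lemma summable_norm_ordinaryHypergeometricCoefficient_mul_pow (a b c : 𝕂)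
    {x : 𝕂} (hx : ‖x‖ < 1) :
    Summable fun n ↦ ‖ordinaryHypergeometricCoefficient a b c n * x ^ n‖ := by
  have hx_ball : x ∈ Metric.eball 0 (ordinaryHypergeometricSeries 𝕂 a b c).radius :=
    Metric.eball_subset_eball (one_le_radius_ordinaryHypergeometricSeries a b c)
      (by simpa [enorm_eq_nnnorm, ← NNReal.coe_lt_one] using hx)
  simpa only [ordinaryHypergeometricSeries_apply_eq, smul_eq_mul] using
    (ordinaryHypergeometricSeries 𝕂 a b c).summable_norm_apply hx_ball

lemma hasSum_ordinaryHypergeometric (a b c : 𝕂) {x : 𝕂} (hx : ‖x‖ < 1) :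
    HasSum (fun n ↦ ordinaryHypergeometricCoefficient a b c n * x ^ n) (₂F₁ a b c x) := by
  simpa only [ordinaryHypergeometric_eq_tsum, smul_eq_mul] using
    (summable_norm_ordinaryHypergeometricCoefficient_mul_pow a b c hx).of_norm.hasSum

lemma hasSum_multichoose_mul_pow (s : ℝ) {x : ℝ} (hx : ‖x‖ < 1) :
    HasSum (fun n ↦ Ring.multichoose s n * x ^ n) ((1 - x) ^ (-s)) := by
  have hx_ball : x ∈ Metric.eball (0 : ℝ) 1 := by
    simpa [enorm_eq_nnnorm, ← NNReal.coe_lt_one] using hx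
  have h := (Real.one_div_one_sub_rpow_hasFPowerSeriesOnBall_zero s).hasSum hx_ball
  have hx1 : 0 ≤ 1 - x := by linarith [(abs_lt.mp hx).2]
  simpa [FormalMultilinearSeries.ofScalars_apply_eq, Ring.multichoose_eq, Real.rpow_neg hx1,
    mul_comm] using h

lemma tsum_coeff_mul_mul_pow {R : Type*} [NormedCommRing R] [CompleteSpace R] {p q : R⟦X⟧} {x : R}
    (hp : Summable fun n ↦ ‖PowerSeries.coeff n p * x ^ n‖)
    (hq : Summable fun n ↦ ‖PowerSeries.coeff n q * x ^ n‖) :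
    ∑' n, PowerSeries.coeff n (p * q) * x ^ n =
      (∑' n, PowerSeries.coeff n p * x ^ n) * ∑' n, PowerSeries.coeff n q * x ^ n := by
  rw [tsum_mul_tsum_eq_tsum_sum_antidiagonal_of_summable_norm hp hq]
  refine tsum_congr fun n ↦ ?_
  rw [PowerSeries.coeff_mul, Finset.sum_mul]
  refine Finset.sum_congr rfl fun kl hkl ↦ ?_
  rw [← Finset.HasAntidiagonal.mem_antidiagonal.mp hkl, pow_add, mul_mul_mul_comm]

theorem ordinaryHypergeometric_eq_rpow_mul (a b : ℝ) {c x : ℝ} (hc : ∀ n : ℕ, c + n ≠ 0)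
    (hx : ‖x‖ < 1) :
    ₂F₁ a b c x = (1 - x) ^ (c - a - b) * ₂F₁ (c - a) (c - b) c x := by
  have hp := hasSum_multichoose_mul_pow (a + b - c) hx
  have hprod := tsum_coeff_mul_mul_pow (p := oneSubPowNegSeries (a + b - c))
    (q := hypergeometricPowerSeries (c - a) (c - b) c) (x := x)
    (by simpa only [oneSubPowNegSeries, PowerSeries.coeff_mk] using hp.summable.norm)
    (by simpa only [hypergeometricPowerSeries, PowerSeries.coeff_mk] using
      summable_norm_ordinaryHypergeometricCoefficient_mul_pow (c - a) (c - b) c hx)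
  rw [← hypergeometricPowerSeries_eq_oneSubPowNegSeries_mul a b hc] at hprod
  simp only [hypergeometricPowerSeries, oneSubPowNegSeries, PowerSeries.coeff_mk, hp.tsum_eq,
    (hasSum_ordinaryHypergeometric _ _ c hx).tsum_eq] at hprod
  rwa [show c - a - b = -(a + b - c) by ring]

end Convergence

section ConfluentHypergeometricLimit

/-- The confluent hypergeometric limit function `₀F₁(c; x) = ∑ x ^ n / ((c)_n n!)`. -/
noncomputable def confluentHypergeometricLimit {K : Type*} [Field K] [TopologicalSpace K]
    (c x : K) : K :=
  ∑' n : ℕ, x ^ n / ((ascPochhammer K n).eval c * n !)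

lemma confluentHypergeometricLimit_mul {K : Type*} [Field K] [TopologicalSpace K] (c x y : K) :
    confluentHypergeometricLimit c (x * y) =
      ∑' n : ℕ, x ^ n / ((ascPochhammer K n).eval c * n !) * y ^ n :=
  tsum_congr fun n ↦ by rw [mul_pow, mul_div_right_comm]

lemma summable_confluentHypergeometricLimit {𝕂 : Type*} [RCLike 𝕂] (c x : 𝕂) :
    Summable fun n : ℕ ↦ x ^ n / ((ascPochhammer 𝕂 n).eval c * n !) := by
  have inv_tendsto (d : 𝕂) : Tendsto (fun n : ℕ ↦ 1 / (d + n)) atTop (𝓝 0) := by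
    simpa using tendsto_add_mul_div_add_mul_atTop_nhds 1 d (0 : 𝕂) one_ne_zero
  have ratio_tendsto :
      Tendsto (fun n : ℕ ↦ ‖x * (1 / (c + n) * (1 / (1 + n)))‖) atTop (𝓝 0) := by
    simpa using (((inv_tendsto c).mul (inv_tendsto 1)).const_mul x).norm
  refine summable_of_ratio_norm_eventually_le (r := 1 / 2) (by norm_num) ?_
  filter_upwards [ratio_tendsto.eventually_le_const (by norm_num : (0 : ℝ) < 1 / 2)] with n hn
  have term_succ : x ^ (n + 1) / ((ascPochhammer 𝕂 (n + 1)).eval c * (n + 1)!) =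
      x * (1 / (c + n) * (1 / (1 + n))) * (x ^ n / ((ascPochhammer 𝕂 n).eval c * n !)) := by
    rw [ascPochhammer_succ_eval, Nat.factorial_succ]
    push_cast
    simp only [div_eq_mul_inv, mul_inv, add_comm (n : 𝕂) 1]
    ring
  rw [term_succ, norm_mul]
  gcongr

lemma one_le_confluentHypergeometricLimit {c x : ℝ} (hc : 0 < c) (hx : 0 ≤ x) :
    1 ≤ confluentHypergeometricLimit c x := by
  have term_nonneg (n : ℕ) : 0 ≤ x ^ n / ((ascPochhammer ℝ n).eval c * n !) := by
    have := ascPochhammer_pos n c hc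
    positivity
  simpa [confluentHypergeometricLimit] using
    (summable_confluentHypergeometricLimit c x).le_tsum 0 fun n _ ↦ term_nonneg n

end ConfluentHypergeometricLimit

section CoefficientComparison

lemma ascPochhammer_eval_nonneg {R : Type*} [Semiring R] [PartialOrder R] [IsOrderedRing R]
    {s : R} (hs : 0 ≤ s) (n : ℕ) : 0 ≤ (ascPochhammer R n).eval s := by
  induction n with
  | zero => simp
  | succ n ih =>
    rw [ascPochhammer_succ_eval]
    exact mul_nonneg ih (add_nonneg hs n.cast_nonneg)

lemma pow_add_ascPochhammer_eval_mul_le {R : Type*} [CommRing R] [PartialOrder R] [IsOrderedRing R]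
    {a b c : R} (hab : 0 ≤ a * b) (hc : 0 ≤ c) (habc : 0 ≤ c + a + b) {k : ℕ} (hk : k ≠ 0) :
    (a * b) ^ k + (ascPochhammer R k).eval c * (ascPochhammer R k).eval (c + a + b) ≤
      (ascPochhammer R k).eval (c + a) * (ascPochhammer R k).eval (c + b) := by
  induction k, Nat.one_le_iff_ne_zero.mpr hk using Nat.le_induction with
  | base =>
    simp only [ascPochhammer_one, eval_X, pow_one]
    exact le_of_eq (by ring)
  | succ k hk1 ih =>
    have hpq := mul_nonneg (ascPochhammer_eval_nonneg hc k) (ascPochhammer_eval_nonneg habc k)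
    have hm : 0 ≤ (c + k) * (c + a + b + k) :=
      mul_nonneg (add_nonneg hc k.cast_nonneg) (add_nonneg habc k.cast_nonneg)
    have ih := ih (Nat.one_le_iff_ne_zero.mp hk1)
    simp only [ascPochhammer_succ_eval]
    set p := (ascPochhammer R k).eval c
    set q := (ascPochhammer R k).eval (c + a + b)
    set r := (ascPochhammer R k).eval (c + a)
    set t := (ascPochhammer R k).eval (c + b)
    calc (a * b) ^ (k + 1) + p * (c + k) * (q * (c + a + b + k))
        ≤ (a * b) ^ (k + 1) + p * (c + k) * (q * (c + a + b + k)) +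
            ((a * b) ^ k * ((c + k) * (c + a + b + k)) + p * q * (a * b)) :=
          le_add_of_nonneg_right
            (add_nonneg (mul_nonneg (pow_nonneg hab k) hm) (mul_nonneg hpq hab))
      _ = ((a * b) ^ k + p * q) * ((c + k) * (c + a + b + k) + a * b) := by ring
      _ ≤ (r * t) * ((c + k) * (c + a + b + k) + a * b) :=
          mul_le_mul_of_nonneg_right ih (add_nonneg hm hab)
      _ = r * (c + a + k) * (t * (c + b + k)) := by ring

lemma multichoose_eq_ascPochhammer_eval_div {K : Type*} [Field K] [CharZero K] (s : K) (n : ℕ) :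
    Ring.multichoose s n = (ascPochhammer K n).eval s / n ! := by
  rw [eq_div_iff (Nat.cast_ne_zero.mpr n.factorial_ne_zero), mul_comm, ← nsmul_eq_mul,
    Ring.factorial_nsmul_multichoose_eq_ascPochhammer, ascPochhammer_smeval_eq_eval]

lemma pow_div_add_multichoose_le {K : Type*} [Field K] [LinearOrder K] [IsStrictOrderedRing K]
    {a b c : K} (hab : 0 ≤ a * b) (hc : 0 < c) (habc : 0 ≤ c + a + b) {k : ℕ} (hk : k ≠ 0) :
    (a * b) ^ k / ((ascPochhammer K k).eval c * k !) + Ring.multichoose (c + a + b) k ≤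
      ordinaryHypergeometricCoefficient (c + a) (c + b) c k := by
  have hck : 0 < (ascPochhammer K k).eval c := ascPochhammer_pos k c hc
  calc _ = ((a * b) ^ k + (ascPochhammer K k).eval c * (ascPochhammer K k).eval (c + a + b)) /
        ((ascPochhammer K k).eval c * k !) := by
          rw [multichoose_eq_ascPochhammer_eval_div]
          field_simp
    _ ≤ (ascPochhammer K k).eval (c + a) * (ascPochhammer K k).eval (c + b) /
        ((ascPochhammer K k).eval c * k !) := by
          gcongr
          exact pow_add_ascPochhammer_eval_mul_le hab hc.le habc hk
    _ = ordinaryHypergeometricCoefficient (c + a) (c + b) c k := by field_simp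

end CoefficientComparison

section LowerBound

variable {a b c x : ℝ}

lemma confluentHypergeometricLimit_add_rpow_le (hab : 0 ≤ a * b) (hc : 0 < c)
    (habc : 0 ≤ c + a + b) (hx0 : 0 ≤ x) (hx1 : x < 1) :
    confluentHypergeometricLimit c (a * b * x) + (1 - x) ^ (-(c + a + b)) ≤
      ₂F₁ (c + a) (c + b) c x + 1 := by
  have hx : ‖x‖ < 1 := by rwa [Real.norm_of_nonneg hx0]
  refine hasSum_le (fun k ↦ ?_)
    ((summable_confluentHypergeometricLimit c (a * b * x)).hasSum.add
      (hasSum_multichoose_mul_pow (c + a + b) hx))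
    ((hasSum_ordinaryHypergeometric (c + a) (c + b) c hx).add (hasSum_ite_eq 0 1))
  rcases eq_or_ne k 0 with rfl | hk
  · simp [ordinaryHypergeometricCoefficient]
  · rw [if_neg hk, add_zero, mul_pow, mul_div_right_comm, ← add_mul]
    gcongr
    exact pow_div_add_multichoose_le hab hc habc hk

theorem gauss2F1_lower_bound_general (hab : 0 ≤ a * b) (hc : 0 < c) (habc : 0 ≤ c + a + b)
    (hx0 : 0 ≤ x) (hx1 : x < 1) :
    1 + (1 - x) ^ (c + a + b) * (confluentHypergeometricLimit c (a * b * x) - 1) ≤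
        ₂F₁ (-a) (-b) c x ∧
      1 ≤ 1 + (1 - x) ^ (c + a + b) * (confluentHypergeometricLimit c (a * b * x) - 1) := by
  have hpow : 0 < (1 - x) ^ (c + a + b) := Real.rpow_pos_of_pos (sub_pos.mpr hx1) _
  refine ⟨?_, le_add_of_nonneg_right (mul_nonneg hpow.le (sub_nonneg.mpr
    (one_le_confluentHypergeometricLimit hc (mul_nonneg hab hx0))))⟩
  have euler : ₂F₁ (-a) (-b) c x = (1 - x) ^ (c + a + b) * ₂F₁ (c + a) (c + b) c x := by
    simpa only [sub_neg_eq_add] using ordinaryHypergeometric_eq_rpow_mul (-a) (-b)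
      (fun n ↦ by positivity) (by rwa [Real.norm_of_nonneg hx0])
  calc 1 + (1 - x) ^ (c + a + b) * (confluentHypergeometricLimit c (a * b * x) - 1)
      = (1 - x) ^ (c + a + b) * (confluentHypergeometricLimit c (a * b * x) +
          (1 - x) ^ (-(c + a + b)) - 1) := by
        rw [Real.rpow_neg (sub_pos.mpr hx1).le]
        field_simp
        ring
    _ ≤ (1 - x) ^ (c + a + b) * ₂F₁ (c + a) (c + b) c x := by
        gcongr
        linarith [confluentHypergeometricLimit_add_rpow_le hab hc habc hx0 hx1]
    _ = ₂F₁ (-a) (-b) c x := euler.symm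

end LowerBound

/-- Quantitative lower bound for the Gauss hypergeometric series:
for `a, b ≥ 0`, `c > 0` and `0 ≤ x < 1`,
`₂F₁(−a, −b; c; x) ≥ 1 + (1−x)^{c+a+b} (₀F₁(c; abx) − 1) ≥ 1`. -/
theorem gauss2F1_lower_bound (a b c x : ℝ) (ha : 0 ≤ a) (hb : 0 ≤ b)
    (hc : 0 < c) (hx0 : 0 ≤ x) (hx1 : x < 1) :
    (∑' k : ℕ, (ascPochhammer ℝ k).eval (-a) * (ascPochhammer ℝ k).eval (-b) /
        ((ascPochhammer ℝ k).eval c * (k.factorial : ℝ)) * x ^ k) ≥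
      1 + (1 - x) ^ (c + a + b) *
        ((∑' k : ℕ, (a * b) ^ k /
            ((ascPochhammer ℝ k).eval c * (k.factorial : ℝ)) * x ^ k) - 1) ∧
    1 + (1 - x) ^ (c + a + b) *
        ((∑' k : ℕ, (a * b) ^ k /
            ((ascPochhammer ℝ k).eval c * (k.factorial : ℝ)) * x ^ k) - 1) ≥ 1 := by
  rw [← ordinaryHypergeometric_eq_tsum_div, ← confluentHypergeometricLimit_mul]
  exact gauss2F1_lower_bound_general (mul_nonneg ha hb) hc (by positivity) hx0 hx1
end

section
/- Let α > 1, and let a, b, c be real numbers with a > 0 and ab − c² > 0. Then for every real ν > −α/2, the Lebesgue integral over D = {(x,y,z) ∈ ℝ³ : x > 0, y > 0, xy − z² > 0} satisfies ∫_D x^{ν} (xy − z²)^{(α−3)/2} exp(−(a x + b y + 2 c z)) d(x,y,z) = √π · Γ((α−1)/2) · Γ(α/2 + ν) · b^{ν} (ab − c²)^{−(α/2 + ν)}. (This is the p_i = 1 case of the formula E(|X_{ii}|^{ν}) = |2Σ_{ii}|^{ν} Γ_{p_i}(α/2+ν)/Γ_{p_i}(α/2) for the expectation of a power of a principal minor of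 a Wishart random matrix.) -/
open MeasureTheory Real

/-!
For fixed `x > 0` the section of the cone is `y > z² / x`. Integrating out `y` is a Gamma integral
in the Schur complement `y - z² / x`, and integrating out `z` is then a Gaussian integral with
quadratic coefficient `b / x`. What remains is, up to a constant, the Gamma density
`x ^ (α / 2 - 1) * exp (-((a * b - c ^ 2) / b) * x)`, whose moments are values of `Γ`.
-/

open scoped ENNReal

section GammaAndGaussianIntegrals

variable {s r : ℝ}

lemma lintegral_rpow_mul_exp_neg_mul_Ioi (hs : 0 < s) (hr : 0 < r) :
    ∫⁻ t in Set.Ioi (0 : ℝ), ENNReal.ofReal (t ^ (s - 1) * exp (-(r * t))) =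
      ENNReal.ofReal (r ^ (-s) * Gamma s) := by
  have hint : IntegrableOn (fun t ↦ t ^ (s - 1) * exp (-(r * t))) (Set.Ioi 0) := by
    simpa only [rpow_one, neg_mul] using
      integrableOn_rpow_mul_exp_neg_mul_rpow (p := 1) (by linarith) one_pos hr
  rw [← ofReal_integral_eq_lintegral_ofReal hint, integral_rpow_mul_exp_neg_mul_Ioi hs hr,
    one_div, inv_rpow hr.le, rpow_neg hr.le]
  filter_upwards [ae_restrict_mem measurableSet_Ioi] with t (ht : 0 < t)
  exact mul_nonneg (rpow_nonneg ht.le _) (exp_nonneg _)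

lemma lintegral_sub_rpow_mul_exp_neg_mul_Ioi (hs : 0 < s) (hr : 0 < r) (m : ℝ) :
    ∫⁻ t in Set.Ioi m, ENNReal.ofReal ((t - m) ^ (s - 1) * exp (-(r * t))) =
      ENNReal.ofReal (exp (-(r * m)) * (r ^ (-s) * Gamma s)) := by
  have hshift (t : ℝ) : (t - m) ^ (s - 1) * exp (-(r * t)) =
      exp (-(r * m)) * ((t - m) ^ (s - 1) * exp (-(r * (t - m)))) := by
    rw [mul_left_comm, ← exp_add]
    ring_nf
  have htranslate := (measurePreserving_sub_right volume m).setLIntegral_comp_preimage_emb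
    (MeasurableEquiv.subRight m).measurableEmbedding
    (fun t ↦ ENNReal.ofReal (t ^ (s - 1) * exp (-(r * t)))) (Set.Ioi 0)
  rw [Set.preimage_sub_const_Ioi, zero_add] at htranslate
  simp_rw [hshift, ENNReal.ofReal_mul (exp_nonneg _)]
  rw [lintegral_const_mul' _ _ ENNReal.ofReal_ne_top, htranslate,
    lintegral_rpow_mul_exp_neg_mul_Ioi hs hr]

lemma lintegral_exp_neg_mul_sq (hr : 0 < r) :
    ∫⁻ t : ℝ, ENNReal.ofReal (exp (-r * t ^ 2)) = ENNReal.ofReal √(π / r) := by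
  rw [← integral_gaussian, ofReal_integral_eq_lintegral_ofReal (integrable_exp_neg_mul_sq hr)]
  exact ae_of_all _ fun t ↦ exp_nonneg _

lemma lintegral_exp_neg_mul_sq_add_mul (hr : 0 < r) (k : ℝ) :
    ∫⁻ t : ℝ, ENNReal.ofReal (exp (-(r * t ^ 2 + k * t))) =
      ENNReal.ofReal (exp (k ^ 2 / (4 * r)) * √(π / r)) := by
  have complete_square (t : ℝ) :
      -(r * (t - k / (2 * r)) ^ 2 + k * (t - k / (2 * r))) =
        k ^ 2 / (4 * r) + -r * t ^ 2 := by
    field_simp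
    ring
  rw [← lintegral_sub_right_eq_self _ (k / (2 * r))]
  simp_rw [complete_square, exp_add, ENNReal.ofReal_mul (exp_nonneg _)]
  rw [lintegral_const_mul' _ _ ENNReal.ofReal_ne_top, lintegral_exp_neg_mul_sq hr]

end GammaAndGaussianIntegrals

/-- The cone of positive definite real symmetric matrices `[[x, z], [z, y]]`, encoded by the
triples `(x, y, z)` with the off-diagonal entry last. -/
def posDefCone : Set (ℝ × ℝ × ℝ) :=
  {q | 0 < q.1 ∧ 0 < q.2.1 ∧ 0 < q.1 * q.2.1 - q.2.2 ^ 2}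

lemma measurableSet_posDefCone : MeasurableSet posDefCone := by
  unfold posDefCone
  measurability

lemma mem_posDefCone_iff {x y z : ℝ} (hx : 0 < x) :
    (x, y, z) ∈ posDefCone ↔ z ^ 2 / x < y := by
  rw [div_lt_iff₀' hx]
  refine ⟨fun h ↦ sub_pos.mp h.2.2, fun h ↦ ⟨hx, ?_, sub_pos.mpr h⟩⟩
  exact pos_of_mul_pos_right ((sq_nonneg z).trans_lt h) hx.le

lemma setLIntegral_posDefCone {f : ℝ × ℝ × ℝ → ℝ≥0∞} (hf : Measurable f) :
    ∫⁻ q in posDefCone, f q =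
      ∫⁻ x in Set.Ioi 0, ∫⁻ z, ∫⁻ y in Set.Ioi (z ^ 2 / x), f (x, y, z) := by
  classical
  have hmeas : Measurable (posDefCone.indicator f) := hf.indicator measurableSet_posDefCone
  rw [← lintegral_indicator measurableSet_posDefCone, Measure.volume_eq_prod,
    lintegral_prod _ hmeas.aemeasurable, ← lintegral_indicator measurableSet_Ioi]
  refine lintegral_congr fun x ↦ ?_
  by_cases hx : 0 < x
  · rw [Set.indicator_of_mem (Set.mem_Ioi.mpr hx), Measure.volume_eq_prod,
      lintegral_prod_symm' (fun w ↦ posDefCone.indicator f (x, w)) (by fun_prop)]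
    refine lintegral_congr fun z ↦ ?_
    rw [← lintegral_indicator measurableSet_Ioi]
    simp only [Set.indicator_apply, mem_posDefCone_iff hx, Set.mem_Ioi]
  · have hempty (w : ℝ × ℝ) : (x, w) ∉ posDefCone := fun h ↦ hx h.1
    simp only [Set.indicator_of_notMem (hempty _), lintegral_zero,
      Set.indicator_of_notMem (Set.notMem_Ioi.mpr (not_lt.mp hx))]

/-- The unnormalized density at `(x, y, z)` of the bivariate Wishart distribution with `α` degrees
of freedom and scale matrix `Σ`, where `Σ⁻¹ / 2 = [[a, c], [c, b]]`. It is meant to be integrated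
over `posDefCone`; outside the cone its values are not set to zero. -/
noncomputable def wishartWeight (α a b c : ℝ) (q : ℝ × ℝ × ℝ) : ℝ :=
  (q.1 * q.2.1 - q.2.2 ^ 2) ^ ((α - 3) / 2) * exp (-(a * q.1 + b * q.2.1 + 2 * c * q.2.2))

section WishartWeight

variable {α a b c : ℝ}

lemma measurable_wishartWeight : Measurable (wishartWeight α a b c) := by
  unfold wishartWeight
  fun_prop

lemma wishartWeight_nonneg {q : ℝ × ℝ × ℝ} (hq : q ∈ posDefCone) :
    0 ≤ wishartWeight α a b c q :=
  mul_nonneg (rpow_nonneg hq.2.2.le _) (exp_nonneg _)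

lemma wishartWeight_eq_schur_complement {x y z : ℝ} (hx : 0 < x) (hy : z ^ 2 / x < y) :
    wishartWeight α a b c (x, y, z) =
      x ^ ((α - 3) / 2) * exp (-(a * x + 2 * c * z)) *
        ((y - z ^ 2 / x) ^ ((α - 1) / 2 - 1) * exp (-(b * y))) := by
  have hdet : x * y - z ^ 2 = x * (y - z ^ 2 / x) := by field_simp
  have hexp : -(a * x + b * y + 2 * c * z) = -(a * x + 2 * c * z) + -(b * y) := by ring
  have hpow : (α - 1) / 2 - 1 = (α - 3) / 2 := by ring
  simp only [wishartWeight]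
  rw [hdet, mul_rpow hx.le (sub_pos.mpr hy).le, hexp, exp_add, hpow]
  ring

lemma setLIntegral_Ioi_wishartWeight (hα : 1 < α) (hb : 0 < b) {x : ℝ} (hx : 0 < x) (z : ℝ) :
    ∫⁻ y in Set.Ioi (z ^ 2 / x), ENNReal.ofReal (wishartWeight α a b c (x, y, z)) =
      ENNReal.ofReal (b ^ (-((α - 1) / 2)) * Gamma ((α - 1) / 2) *
          (x ^ ((α - 3) / 2) * exp (-(a * x)))) *
        ENNReal.ofReal (exp (-(b / x * z ^ 2 + 2 * c * z))) := by
  have : 0 < Gamma ((α - 1) / 2) := Gamma_pos_of_pos (by linarith)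
  have hexp : exp (-(a * x + 2 * c * z)) * exp (-(b * (z ^ 2 / x))) =
      exp (-(a * x)) * exp (-(b / x * z ^ 2 + 2 * c * z)) := by
    rw [← exp_add, ← exp_add]
    ring_nf
  have hfactor : Set.EqOn (fun y ↦ ENNReal.ofReal (wishartWeight α a b c (x, y, z)))
      (fun y ↦ ENNReal.ofReal (x ^ ((α - 3) / 2) * exp (-(a * x + 2 * c * z))) *
        ENNReal.ofReal ((y - z ^ 2 / x) ^ ((α - 1) / 2 - 1) * exp (-(b * y))))
      (Set.Ioi (z ^ 2 / x)) := fun y hy ↦ by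
    simp only [wishartWeight_eq_schur_complement hx hy]
    exact ENNReal.ofReal_mul (by positivity)
  rw [setLIntegral_congr_fun measurableSet_Ioi hfactor,
    lintegral_const_mul' _ _ ENNReal.ofReal_ne_top,
    lintegral_sub_rpow_mul_exp_neg_mul_Ioi (by linarith) hb, ← ENNReal.ofReal_mul (by positivity),
    ← ENNReal.ofReal_mul (by positivity)]
  congr 1
  linear_combination
    b ^ (-((α - 1) / 2)) * Gamma ((α - 1) / 2) * x ^ ((α - 3) / 2) * hexp

lemma rpow_mul_exp_mul_sqrt_pi_div_div (hb : 0 < b) {x : ℝ} (hx : 0 < x) :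
    b ^ (-((α - 1) / 2)) * (x ^ ((α - 3) / 2) * exp (-(a * x))) *
        (exp ((2 * c) ^ 2 / (4 * (b / x))) * √(π / (b / x))) =
      √π * b ^ (-(α / 2)) * (x ^ (α / 2 - 1) * exp (-((a * b - c ^ 2) / b * x))) := by
  have hsqrt : √(π / (b / x)) = √π * b ^ (-(1 / 2) : ℝ) * x ^ (1 / 2 : ℝ) := by
    rw [div_div_eq_mul_div, sqrt_div (by positivity), sqrt_mul pi_pos.le, sqrt_eq_rpow b,
      sqrt_eq_rpow x, rpow_neg hb.le]
    ring
  have hb_pow : b ^ (-(α / 2)) = b ^ (-((α - 1) / 2)) * b ^ (-(1 / 2) : ℝ) := by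
    rw [← rpow_add hb]
    ring_nf
  have hx_pow : x ^ (α / 2 - 1) = x ^ ((α - 3) / 2) * x ^ (1 / 2 : ℝ) := by
    rw [← rpow_add hx]
    ring_nf
  have hexp : exp (-((a * b - c ^ 2) / b * x)) =
      exp (-(a * x)) * exp ((2 * c) ^ 2 / (4 * (b / x))) := by
    rw [← exp_add]
    congr 1
    field_simp
    ring
  rw [hsqrt, hb_pow, hx_pow, hexp]
  ring

lemma lintegral_setLIntegral_Ioi_wishartWeight (hα : 1 < α) (hb : 0 < b) {x : ℝ} (hx : 0 < x) :
    ∫⁻ z, ∫⁻ y in Set.Ioi (z ^ 2 / x), ENNReal.ofReal (wishartWeight α a b c (x, y, z)) =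
      ENNReal.ofReal (√π * Gamma ((α - 1) / 2) * b ^ (-(α / 2))) *
        ENNReal.ofReal (x ^ (α / 2 - 1) * exp (-((a * b - c ^ 2) / b * x))) := by
  have : 0 < Gamma ((α - 1) / 2) := Gamma_pos_of_pos (by linarith)
  simp_rw [setLIntegral_Ioi_wishartWeight hα hb hx]
  rw [lintegral_const_mul' _ _ ENNReal.ofReal_ne_top,
    lintegral_exp_neg_mul_sq_add_mul (div_pos hb hx), ← ENNReal.ofReal_mul (by positivity),
    ← ENNReal.ofReal_mul (by positivity)]
  congr 1
  linear_combination Gamma ((α - 1) / 2) *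
    rpow_mul_exp_mul_sqrt_pi_div_div (α := α) (a := a) (c := c) hb hx

/-- Up to normalization, the diagonal entry `x` is Gamma distributed with shape `α / 2` and rate
`(a * b - c ^ 2) / b`. -/
theorem setLIntegral_fst_mul_wishartWeight (hα : 1 < α) (hb : 0 < b) {g : ℝ → ℝ≥0∞}
    (hg : Measurable g) :
    ∫⁻ q in posDefCone, g q.1 * ENNReal.ofReal (wishartWeight α a b c q) =
      ENNReal.ofReal (√π * Gamma ((α - 1) / 2) * b ^ (-(α / 2))) *
        ∫⁻ x in Set.Ioi 0,
          g x * ENNReal.ofReal (x ^ (α / 2 - 1) * exp (-((a * b - c ^ 2) / b * x))) := by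
  have hW : Measurable fun q ↦ ENNReal.ofReal (wishartWeight α a b c q) :=
    measurable_wishartWeight.ennreal_ofReal
  have pull_out {x : ℝ} (hx : 0 < x) :
      ∫⁻ z, ∫⁻ y in Set.Ioi (z ^ 2 / x), g x * ENNReal.ofReal (wishartWeight α a b c (x, y, z)) =
        g x * ∫⁻ z, ∫⁻ y in Set.Ioi (z ^ 2 / x),
          ENNReal.ofReal (wishartWeight α a b c (x, y, z)) := by
    have hWy (z : ℝ) : Measurable fun y ↦ ENNReal.ofReal (wishartWeight α a b c (x, y, z)) :=
      hW.comp (by fun_prop)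
    simp_rw [lintegral_const_mul (g x) (hWy _), setLIntegral_Ioi_wishartWeight hα hb hx]
    exact lintegral_const_mul _ (by fun_prop)
  rw [setLIntegral_posDefCone (by fun_prop),
    ← lintegral_const_mul' _ _ ENNReal.ofReal_ne_top]
  refine setLIntegral_congr_fun measurableSet_Ioi fun x hx ↦ ?_
  rw [pull_out hx, lintegral_setLIntegral_Ioi_wishartWeight hα hb hx, mul_left_comm]

lemma setLIntegral_fst_rpow_mul_wishartWeight (hα : 1 < α) (hb : 0 < b)
    (hdet : 0 < a * b - c ^ 2) {ν : ℝ} (hν : 0 < α / 2 + ν) :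
    ∫⁻ q in posDefCone, ENNReal.ofReal (q.1 ^ ν * wishartWeight α a b c q) =
      ENNReal.ofReal (√π * Gamma ((α - 1) / 2) * Gamma (α / 2 + ν) * b ^ ν *
        (a * b - c ^ 2) ^ (-(α / 2 + ν))) := by
  have : 0 < Gamma ((α - 1) / 2) := Gamma_pos_of_pos (by linarith)
  have hsplit : Set.EqOn (fun q ↦ ENNReal.ofReal (q.1 ^ ν * wishartWeight α a b c q))
      (fun q ↦ ENNReal.ofReal (q.1 ^ ν) * ENNReal.ofReal (wishartWeight α a b c q))
      posDefCone :=
    fun q hq ↦ ENNReal.ofReal_mul (rpow_nonneg hq.1.le ν)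
  have hmerge : Set.EqOn (fun x ↦ ENNReal.ofReal (x ^ ν) *
        ENNReal.ofReal (x ^ (α / 2 - 1) * exp (-((a * b - c ^ 2) / b * x))))
      (fun x ↦ ENNReal.ofReal (x ^ (α / 2 + ν - 1) * exp (-((a * b - c ^ 2) / b * x))))
      (Set.Ioi 0) := fun x (hx : 0 < x) ↦ by
    simp only [← ENNReal.ofReal_mul (rpow_nonneg hx.le ν), ← mul_assoc, ← rpow_add hx]
    ring_nf
  have hpow : b ^ (-(α / 2)) * ((a * b - c ^ 2) / b) ^ (-(α / 2 + ν)) =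
      b ^ ν * (a * b - c ^ 2) ^ (-(α / 2 + ν)) := by
    rw [div_rpow hdet.le hb.le, mul_div_left_comm, ← rpow_sub hb, mul_comm]
    ring_nf
  rw [setLIntegral_congr_fun measurableSet_posDefCone hsplit,
    setLIntegral_fst_mul_wishartWeight hα hb (g := fun x ↦ ENNReal.ofReal (x ^ ν)) (by fun_prop),
    setLIntegral_congr_fun measurableSet_Ioi hmerge,
    lintegral_rpow_mul_exp_neg_mul_Ioi hν (div_pos hdet hb), ← ENNReal.ofReal_mul (by positivity)]
  congr 1
  linear_combination √π * Gamma ((α - 1) / 2) * Gamma (α / 2 + ν) * hpow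

end WishartWeight

/-- Moment of a single diagonal entry of a bivariate Wishart random matrix,
as a Lebesgue integral over `D = {(x,y,z) : x > 0, y > 0, xy − z² > 0}`:
`∫_D x^ν (xy−z²)^{(α−3)/2} e^{−(ax+by+2cz)} = √π Γ((α−1)/2) Γ(α/2+ν) b^ν (ab−c²)^{−(α/2+ν)}`. -/
theorem wishart_single_minor_moment_2x2 (α a b c ν : ℝ)
    (hα : 1 < α) (ha : 0 < a) (hdet : 0 < a * b - c ^ 2) (hν : -α / 2 < ν) :
    (∫ p in {q : ℝ × ℝ × ℝ | 0 < q.1 ∧ 0 < q.2.1 ∧ 0 < q.1 * q.2.1 - q.2.2 ^ 2},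
        p.1 ^ ν * (p.1 * p.2.1 - p.2.2 ^ 2) ^ ((α - 3) / 2) *
          Real.exp (-(a * p.1 + b * p.2.1 + 2 * c * p.2.2))) =
      Real.sqrt π * Real.Gamma ((α - 1) / 2) * Real.Gamma (α / 2 + ν) *
        b ^ ν * (a * b - c ^ 2) ^ (-(α / 2 + ν)) := by
  have hb : 0 < b := pos_of_mul_pos_right ((sq_nonneg c).trans_lt (sub_pos.mp hdet)) ha.le
  have hshape : 0 < α / 2 + ν := by linarith
  have : 0 < Gamma ((α - 1) / 2) := Gamma_pos_of_pos (by linarith)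
  have : 0 < Gamma (α / 2 + ν) := Gamma_pos_of_pos hshape
  have hnonneg : ∀ᵐ q ∂volume.restrict posDefCone, 0 ≤ q.1 ^ ν * wishartWeight α a b c q := by
    filter_upwards [ae_restrict_mem measurableSet_posDefCone] with q hq
    exact mul_nonneg (rpow_nonneg hq.1.le ν) (wishartWeight_nonneg hq)
  have hmeas : Measurable fun q : ℝ × ℝ × ℝ ↦ q.1 ^ ν * wishartWeight α a b c q :=
    (measurable_fst.pow_const ν).mul measurable_wishartWeight
  simp only [mul_assoc (_ ^ ν) (_ ^ ((α - 3) / 2))]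
  change ∫ q in posDefCone, q.1 ^ ν * wishartWeight α a b c q = _
  rw [integral_eq_lintegral_of_nonneg_ae hnonneg hmeas.aestronglyMeasurable,
    setLIntegral_fst_rpow_mul_wishartWeight hα hb hdet hshape,
    ENNReal.toReal_ofReal (by positivity)]
end
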